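/- arXiv:0804.3189 — 6 statements merged into one kernel-verified Lean document; each statement's English description precedes it below -/
import Mathlib

section
/- For every real number u > 0, ψ(u+1) + γ = -u ∫₀¹ t^{u-1} log(1-t) dt, where ψ is the digamma function and γ is the Euler–Mascheroni constant. -/
/-- The digamma function: the logarithmic derivative of the Gamma function. -/
noncomputable def digamma (x : ℝ) : ℝ := deriv (fun y => Real.log (Real.Gamma y)) x

/-!
Differentiating Euler's integral `B(u, v) = ∫₀¹ t ^ (u - 1) * (1 - t) ^ (v - 1) dt` in `v` brings
down a factor `log (1 - t)`, while differentiating `B(u, v) = Γ(u) Γ(v) / Γ(u + v)` gives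
`B(u, v) * (ψ(v) - ψ(u + v))`. At `v = 1` we have `B(u, 1) = 1 / u` and `ψ(1) = -γ`.
-/

open Filter MeasureTheory Set
open ProbabilityTheory (beta)
open Real (Gamma)

section BetaFunction

variable {u v : ℝ}

lemma ne_neg_natCast_of_pos {x : ℝ} (hx : 0 < x) (m : ℕ) : x ≠ -m :=
  ((neg_nonpos.2 m.cast_nonneg).trans_lt hx).ne'

lemma hasDerivAt_Gamma {x : ℝ} (hx : ∀ m : ℕ, x ≠ -m) :
    HasDerivAt Gamma (Gamma x * digamma x) x := by
  have hd : DifferentiableAt ℝ Gamma x := Real.differentiableAt_Gamma hx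
  have hne : Gamma x ≠ 0 := Real.Gamma_ne_zero hx
  rw [digamma, deriv.log hd hne, mul_div_cancel₀ _ hne]
  exact hd.hasDerivAt

lemma digamma_one : digamma 1 = -Real.eulerMascheroniConstant := by
  have h := hasDerivAt_Gamma (ne_neg_natCast_of_pos one_pos)
  rw [Real.Gamma_one, one_mul] at h
  exact h.unique Real.hasDerivAt_Gamma_one

lemma beta_one_right (hu : ∀ m : ℕ, u ≠ -m) : beta u 1 = u⁻¹ := by
  have hu₀ : u ≠ 0 := by simpa using hu 0
  have hΓ : Gamma u ≠ 0 := Real.Gamma_ne_zero hu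
  rw [beta, Real.Gamma_one, Real.Gamma_add_one hu₀]
  field_simp

lemma hasDerivAt_beta_right (hv : ∀ m : ℕ, v ≠ -m) (huv : ∀ m : ℕ, u + v ≠ -m) :
    HasDerivAt (beta u) (beta u v * (digamma v - digamma (u + v))) v := by
  have hΓ : Gamma (u + v) ≠ 0 := Real.Gamma_ne_zero huv
  have hquot := ((hasDerivAt_Gamma hv).const_mul (Gamma u)).div
    ((hasDerivAt_Gamma huv).comp_const_add u v) hΓ
  refine hquot.congr_deriv ?_
  rw [beta]
  field_simp

lemma ofReal_rpow_mul_one_sub_rpow {t : ℝ} (ht : t ∈ Icc 0 1) (u v : ℝ) :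
    ((t ^ (u - 1) * (1 - t) ^ (v - 1) : ℝ) : ℂ) =
      (t : ℂ) ^ ((u : ℂ) - 1) * (1 - (t : ℂ)) ^ ((v : ℂ) - 1) := by
  rw [Complex.ofReal_mul, Complex.ofReal_cpow ht.1, Complex.ofReal_cpow (sub_nonneg.2 ht.2)]
  push_cast
  rfl

lemma intervalIntegrable_rpow_mul_one_sub_rpow (hu : 0 < u) (hv : 0 < v) :
    IntervalIntegrable (fun t : ℝ => t ^ (u - 1) * (1 - t) ^ (v - 1)) volume 0 1 := by
  have h := Complex.betaIntegral_convergent (u := u) (v := v) (by simpa) (by simpa)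
  rw [intervalIntegrable_iff_integrableOn_Ioc_of_le zero_le_one] at h ⊢
  refine IntegrableOn.congr_fun (Integrable.re h) (fun t ht => ?_) measurableSet_Ioc
  simp only [← ofReal_rpow_mul_one_sub_rpow (Ioc_subset_Icc_self ht), RCLike.re_eq_complex_re,
    Complex.ofReal_re]

lemma integral_rpow_mul_one_sub_rpow (hu : 0 < u) (hv : 0 < v) :
    ∫ t in (0 : ℝ)..1, t ^ (u - 1) * (1 - t) ^ (v - 1) = beta u v := by
  have hint : Complex.betaIntegral u v =
      ((∫ t in (0 : ℝ)..1, t ^ (u - 1) * (1 - t) ^ (v - 1) : ℝ) : ℂ) := by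
    rw [← intervalIntegral.integral_ofReal, Complex.betaIntegral]
    refine intervalIntegral.integral_congr fun t ht => ?_
    rw [uIcc_of_le zero_le_one] at ht
    exact (ofReal_rpow_mul_one_sub_rpow ht u v).symm
  rw [ProbabilityTheory.beta_eq_betaIntegralReal u v hu hv, hint, Complex.ofReal_re]

lemma abs_rpow_mul_log_le {x ε : ℝ} (hx₀ : 0 < x) (hx₁ : x ≤ 1) (hε : 0 < ε) (a : ℝ) :
    |x ^ a * Real.log x| ≤ ε⁻¹ * x ^ (a - ε) :=
  calc |x ^ a * Real.log x|
      = |Real.log x * x ^ ε| * x ^ (a - ε) := by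
        have hpow : x ^ a = x ^ ε * x ^ (a - ε) := by
          rw [← Real.rpow_add hx₀, add_sub_cancel]
        rw [hpow, mul_comm, ← mul_assoc, abs_mul, Real.abs_rpow_of_nonneg hx₀.le, abs_of_pos hx₀]
    _ ≤ ε⁻¹ * x ^ (a - ε) := by
        gcongr
        simpa only [one_div] using (Real.abs_log_mul_self_rpow_lt x ε hx₀ hx₁ hε).le

lemma intervalIntegrable_rpow_mul_one_sub_rpow_mul_log (hu : 0 < u) (hv : 0 < v) :
    IntervalIntegrable (fun t : ℝ => t ^ (u - 1) * ((1 - t) ^ (v - 1) * Real.log (1 - t)))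
      volume 0 1 := by
  have hdom : IntervalIntegrable
      (fun t : ℝ => (v / 2)⁻¹ * (t ^ (u - 1) * (1 - t) ^ (v / 2 - 1))) volume 0 1 :=
    (intervalIntegrable_rpow_mul_one_sub_rpow hu (half_pos hv)).const_mul _
  rw [intervalIntegrable_iff_integrableOn_Ioo_of_le zero_le_one] at hdom ⊢
  refine hdom.mono' (by fun_prop) ((ae_restrict_mem measurableSet_Ioo).mono fun t ht => ?_)
  have hlog := abs_rpow_mul_log_le (sub_pos.2 ht.2) (by linarith [ht.1]) (half_pos hv) (v - 1)
  have htu : 0 ≤ t ^ (u - 1) := Real.rpow_nonneg ht.1.le _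
  rw [norm_mul, Real.norm_of_nonneg htu, Real.norm_eq_abs]
  calc t ^ (u - 1) * |(1 - t) ^ (v - 1) * Real.log (1 - t)|
      ≤ t ^ (u - 1) * ((v / 2)⁻¹ * (1 - t) ^ (v - 1 - v / 2)) := by gcongr
    _ = (v / 2)⁻¹ * (t ^ (u - 1) * (1 - t) ^ (v / 2 - 1)) := by
      rw [show v - 1 - v / 2 = v / 2 - 1 by ring]
      ring

lemma hasDerivAt_integral_rpow_mul_one_sub_rpow (hu : 0 < u) (hv : 0 < v) :
    HasDerivAt (fun w : ℝ => ∫ t in (0 : ℝ)..1, t ^ (u - 1) * (1 - t) ^ (w - 1))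
      (∫ t in (0 : ℝ)..1, t ^ (u - 1) * ((1 - t) ^ (v - 1) * Real.log (1 - t))) v := by
  have hIoo : ∀ᵐ t : ℝ, t ∈ uIoc 0 1 → t ∈ Ioo 0 1 := by
    filter_upwards [volume.ae_ne (1 : ℝ)] with t ht₁ ht
    rw [uIoc_of_le zero_le_one] at ht
    exact ⟨ht.1, ht.2.lt_of_ne ht₁⟩
  refine (intervalIntegral.hasDerivAt_integral_of_dominated_loc_of_deriv_le
    (F' := fun w t => t ^ (u - 1) * ((1 - t) ^ (w - 1) * Real.log (1 - t)))
    (bound := fun t => ‖t ^ (u - 1) * ((1 - t) ^ (v / 2 - 1) * Real.log (1 - t))‖)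
    (Ioi_mem_nhds (half_lt_self hv)) (.of_forall fun w => by fun_prop)
    (intervalIntegrable_rpow_mul_one_sub_rpow hu hv) (by fun_prop) ?_
    (intervalIntegrable_rpow_mul_one_sub_rpow_mul_log hu (half_pos hv)).norm ?_).2
  · filter_upwards [hIoo] with t hmem ht w hw
    obtain ⟨ht₀, ht₁⟩ := hmem ht
    have hpow : (1 - t) ^ (w - 1) ≤ (1 - t) ^ (v / 2 - 1) :=
      Real.rpow_le_rpow_of_exponent_ge (sub_pos.2 ht₁) (by linarith) (by linarith [mem_Ioi.1 hw])
    have hnonneg (a : ℝ) : 0 ≤ (1 - t) ^ a := Real.rpow_nonneg (sub_pos.2 ht₁).le a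
    simp only [norm_mul, Real.norm_of_nonneg (hnonneg _)]
    gcongr
  · filter_upwards [hIoo] with t hmem ht w _
    have hpow := ((hasDerivAt_id w).sub_const 1).const_rpow (sub_pos.2 (hmem ht).2)
    refine (hpow.const_mul (t ^ (u - 1))).congr_deriv ?_
    simp only [id]
    ring

theorem integral_rpow_mul_one_sub_rpow_mul_log (hu : 0 < u) (hv : 0 < v) :
    ∫ t in (0 : ℝ)..1, t ^ (u - 1) * ((1 - t) ^ (v - 1) * Real.log (1 - t)) =
      beta u v * (digamma v - digamma (u + v)) := by
  have hbeta : HasDerivAt (beta u) (beta u v * (digamma v - digamma (u + v))) v :=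
    hasDerivAt_beta_right (ne_neg_natCast_of_pos hv) (ne_neg_natCast_of_pos (add_pos hu hv))
  refine (hasDerivAt_integral_rpow_mul_one_sub_rpow hu hv).unique (hbeta.congr_of_eventuallyEq ?_)
  filter_upwards [lt_mem_nhds hv] with w hw
  exact integral_rpow_mul_one_sub_rpow hu hw

end BetaFunction

theorem stmt_2 (u : ℝ) (hu : 0 < u) :
    digamma (u + 1) + Real.eulerMascheroniConstant =
      -u * ∫ t in (0:ℝ)..1, t ^ (u - 1) * Real.log (1 - t) := by
  have hint : ∫ t in (0:ℝ)..1, t ^ (u - 1) * Real.log (1 - t) =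
      u⁻¹ * (-Real.eulerMascheroniConstant - digamma (u + 1)) := by
    simpa only [sub_self, Real.rpow_zero, one_mul, digamma_one,
      beta_one_right (ne_neg_natCast_of_pos hu)] using
      integral_rpow_mul_one_sub_rpow_mul_log hu one_pos
  rw [hint]
  field_simp
  ring
end

section
/- The sum ∑_{n=1}^∞ H_n / ((2n+1) C(2n,n)) equals the negative of the double integral over the unit square ∫₀¹ ∫₀¹ v(1-v) log(u) / [1 - (1-u) v(1-v)]² du dv. -/
/-!
Expanding `1 / (1 - (1 - u) * w) ^ 2` in powers of `w` and integrating against `log u` term by term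
produces the harmonic numbers, since `∫₀¹ (1 - u) ^ n * log u = -H_{n+1} / (n + 1)`; hence the inner
integral at `w = v * (1 - v)` is `-∑ H_n w ^ n`. Integrating this over `v` term by term turns
`w ^ n` into the Beta integral `1 / ((2 * n + 1) * C(2 * n, n))`. Both interchanges integrate an
absolutely convergent power series in a bounded function against an integrable weight.
-/

open MeasureTheory Set

open scoped Nat

section TermwiseIntegration

variable {α 𝕜 : Type*} [MeasurableSpace α] [RCLike 𝕜] {μ : Measure α}

theorem hasSum_mul_integral_pow_mul {c : ℕ → 𝕜} {p f g : α → 𝕜} {r : ℝ}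
    (hc : Summable fun n ↦ ‖c n‖ * r ^ n) (hp : AEStronglyMeasurable p μ)
    (hpr : ∀ᵐ x ∂μ, ‖p x‖ ≤ r) (hf : ∀ᵐ x ∂μ, HasSum (fun n ↦ c n * p x ^ n) (f x))
    (hg : Integrable g μ) :
    HasSum (fun n ↦ c n * ∫ x, p x ^ n * g x ∂μ) (∫ x, f x * g x ∂μ) := by
  simp only [← integral_const_mul, ← mul_assoc]
  refine hasSum_integral_of_dominated_convergence (fun n x ↦ ‖c n‖ * r ^ n * ‖g x‖)
    (fun n ↦ ((hp.pow n).const_mul (c n)).mul hg.1) (fun n ↦ ?_)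
    (.of_forall fun x ↦ hc.mul_right _) ?_ ?_
  · filter_upwards [hpr] with x hx
    rw [norm_mul, norm_mul, norm_pow]
    gcongr
  · simpa only [tsum_mul_right] using hg.norm.const_mul _
  · filter_upwards [hf] with x hx using hx.mul_right (g x)

end TermwiseIntegration

theorem integral_pow_mul_one_sub_pow (m n : ℕ) :
    ∫ v in (0 : ℝ)..1, v ^ m * (1 - v) ^ n = 1 / ((m + n + 1) * (m + n).choose n) := by
  have re_pos (k : ℕ) : 0 < ((k : ℂ) + 1).re := by simpa using k.cast_add_one_pos (α := ℝ)
  have beta : Complex.betaIntegral (m + 1) (n + 1) = m ! * n ! / (m + n + 1)! := by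
    rw [Complex.betaIntegral_eq_Gamma_mul_div _ _ (re_pos m) (re_pos n),
      Complex.Gamma_nat_eq_factorial, Complex.Gamma_nat_eq_factorial,
      ← Complex.Gamma_nat_eq_factorial (m + n + 1)]
    push_cast
    ring_nf
  have factorials : (m + n).choose n * m ! * n ! = (m + n)! :=
    Nat.add_choose_mul_factorial_mul_factorial m n
  have integral_eq : ∫ v in (0 : ℝ)..1, v ^ m * (1 - v) ^ n = m ! * n ! / (m + n + 1)! := by
    simp only [Complex.betaIntegral, add_sub_cancel_right, Complex.cpow_natCast] at beta
    rw [← Complex.ofReal_inj, ← intervalIntegral.integral_ofReal]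
    push_cast
    exact beta
  rw [integral_eq, Nat.factorial_succ, ← factorials]
  have : ((m + n).choose n : ℝ) ≠ 0 := by exact_mod_cast (Nat.choose_pos (by lia)).ne'
  push_cast
  field_simp

theorem integral_mul_one_sub_pow (n : ℕ) :
    ∫ v in (0 : ℝ)..1, (v * (1 - v)) ^ n = 1 / ((2 * n + 1) * (2 * n).choose n) := by
  simpa only [mul_pow, two_mul] using integral_pow_mul_one_sub_pow n n

theorem mul_one_sub_mem_Icc {v : ℝ} (hv : v ∈ Icc (0 : ℝ) 1) :
    v * (1 - v) ∈ Icc (0 : ℝ) (1 / 4) :=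
  ⟨mul_nonneg hv.1 (sub_nonneg.2 hv.2), by linarith [sq_nonneg (v - 1 / 2)]⟩

theorem hasSum_integral_comp_mul_one_sub {c : ℕ → ℝ} {f : ℝ → ℝ}
    (hc : Summable fun n ↦ ‖c n‖ * (1 / 4) ^ n)
    (hf : ∀ w ∈ Icc (0 : ℝ) (1 / 4), HasSum (fun n ↦ c n * w ^ n) (f w)) :
    HasSum (fun n : ℕ ↦ c n / ((2 * n + 1) * (2 * n).choose n))
      (∫ v in (0 : ℝ)..1, f (v * (1 - v))) := by
  have mem_Icc {v : ℝ} (hv : v ∈ Ioc (0 : ℝ) 1) : v * (1 - v) ∈ Icc (0 : ℝ) (1 / 4) :=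
    mul_one_sub_mem_Icc (Ioc_subset_Icc_self hv)
  have termwise := hasSum_mul_integral_pow_mul (μ := volume.restrict (Ioc (0 : ℝ) 1)) hc
    (by fun_prop : AEStronglyMeasurable (fun v : ℝ ↦ v * (1 - v)) _)
    (ae_restrict_of_forall_mem measurableSet_Ioc fun v hv ↦
      (Real.norm_of_nonneg (mem_Icc hv).1).trans_le (mem_Icc hv).2)
    (ae_restrict_of_forall_mem measurableSet_Ioc fun v hv ↦ hf _ (mem_Icc hv))
    (integrable_const 1)
  simpa only [← intervalIntegral.integral_of_le zero_le_one, mul_one, integral_mul_one_sub_pow,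
    mul_one_div] using termwise

theorem integral_one_sub_pow_succ_mul_log (n : ℕ) :
    (n + 2) * ∫ u in (0 : ℝ)..1, (1 - u) ^ (n + 1) * Real.log u =
      (n + 1) * (∫ u in (0 : ℝ)..1, (1 - u) ^ n * Real.log u) - 1 / (n + 2) := by
  have integrable (k : ℕ) :
      IntervalIntegrable (fun u : ℝ ↦ (1 - u) ^ k * Real.log u) volume 0 1 :=
    intervalIntegral.intervalIntegrable_log'.continuousOn_mul (by fun_prop)
  have integrable_pow : IntervalIntegrable (fun u : ℝ ↦ (1 - u) ^ (n + 1)) volume 0 1 :=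
    Continuous.intervalIntegrable (by fun_prop) _ _
  have integral_one_sub_pow : ∫ u in (0 : ℝ)..1, (1 - u) ^ (n + 1) = 1 / ((n : ℝ) + 2) := by
    rw [intervalIntegral.integral_comp_sub_left (fun u ↦ u ^ (n + 1)), integral_pow]
    norm_num [add_assoc]
  have hasDerivAt (u : ℝ) (hu : u ∈ Ioo (0 : ℝ) 1) :
      HasDerivAt (fun u : ℝ ↦ (1 - u) ^ (n + 1) * (u * Real.log u))
        ((n + 2) * ((1 - u) ^ (n + 1) * Real.log u) - (n + 1) * ((1 - u) ^ n * Real.log u)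
          + (1 - u) ^ (n + 1)) u := by
    refine ((((hasDerivAt_id u).const_sub 1).pow (n + 1)).mul
      (Real.hasDerivAt_mul_log hu.1.ne')).congr_deriv ?_
    simp only [Pi.pow_apply, id, Nat.add_sub_cancel]
    push_cast
    ring
  have ftc := intervalIntegral.integral_eq_sub_of_hasDerivAt_of_le zero_le_one
    (by have := Real.continuous_mul_log; fun_prop) hasDerivAt
    ((((integrable (n + 1)).const_mul _).sub ((integrable n).const_mul _)).add integrable_pow)
  rw [intervalIntegral.integral_add
      (((integrable (n + 1)).const_mul _).sub ((integrable n).const_mul _)) integrable_pow,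
    intervalIntegral.integral_sub ((integrable (n + 1)).const_mul _) ((integrable n).const_mul _),
    intervalIntegral.integral_const_mul, intervalIntegral.integral_const_mul,
    integral_one_sub_pow] at ftc
  simp only [Real.log_one, Real.log_zero, mul_zero, sub_zero] at ftc
  linarith

theorem integral_one_sub_pow_mul_log (n : ℕ) :
    ∫ u in (0 : ℝ)..1, (1 - u) ^ n * Real.log u = -(harmonic (n + 1) / (n + 1)) := by
  induction n with
  | zero => simp
  | succ n ih =>
    have recurrence := integral_one_sub_pow_succ_mul_log n
    rw [ih] at recurrence
    rw [harmonic_succ (n + 1)]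
    push_cast
    field_simp at recurrence ⊢
    linear_combination recurrence

theorem hasSum_succ_mul_pow {𝕜 : Type*} [NormedDivisionRing 𝕜] [HasSummableGeomSeries 𝕜] {w : 𝕜}
    (hw : ‖w‖ < 1) : HasSum (fun n : ℕ ↦ ((n : 𝕜) + 1) * w ^ n) (1 / (1 - w) ^ 2) := by
  simpa using hasSum_choose_mul_geometric_of_norm_lt_one 1 hw

theorem hasSum_mul_integral_one_sub_pow_mul {w : ℝ} (hw : |w| < 1) {g : ℝ → ℝ}
    (hg : IntervalIntegrable g volume 0 1) :
    HasSum (fun n : ℕ ↦ (n + 1) * w ^ n * ∫ u in (0 : ℝ)..1, (1 - u) ^ n * g u)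
      (∫ u in (0 : ℝ)..1, 1 / (1 - (1 - u) * w) ^ 2 * g u) := by
  have abs_one_sub_le {u : ℝ} (hu : u ∈ Ioc (0 : ℝ) 1) : |1 - u| ≤ 1 :=
    abs_le.2 ⟨by linarith [hu.2], by linarith [hu.1]⟩
  have coeff_summable : Summable fun n : ℕ ↦ ‖((n : ℝ) + 1) * w ^ n‖ * 1 ^ n := by
    simpa only [one_pow, mul_one] using (hasSum_succ_mul_pow (w := w) hw).summable.norm
  have expansion {u : ℝ} (hu : u ∈ Ioc (0 : ℝ) 1) :
      HasSum (fun n : ℕ ↦ ((n : ℝ) + 1) * w ^ n * (1 - u) ^ n) (1 / (1 - (1 - u) * w) ^ 2) := by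
    have : ‖(1 - u) * w‖ < 1 := by
      rw [norm_mul]
      exact (mul_le_of_le_one_left (norm_nonneg w) (abs_one_sub_le hu)).trans_lt hw
    simpa only [mul_pow, mul_assoc, mul_comm (w ^ _)] using hasSum_succ_mul_pow this
  simp only [intervalIntegral.integral_of_le zero_le_one]
  exact hasSum_mul_integral_pow_mul coeff_summable (by fun_prop)
    (ae_restrict_of_forall_mem measurableSet_Ioc fun _ ↦ abs_one_sub_le)
    (ae_restrict_of_forall_mem measurableSet_Ioc fun _ ↦ expansion) hg.1

theorem hasSum_harmonic_mul_pow {w : ℝ} (hw : |w| < 1) :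
    HasSum (fun n ↦ (harmonic n : ℝ) * w ^ n)
      (-∫ u in (0 : ℝ)..1, w * Real.log u / (1 - (1 - u) * w) ^ 2) := by
  have log_series :=
    (hasSum_mul_integral_one_sub_pow_mul hw intervalIntegral.intervalIntegrable_log').mul_left (-w)
  have coeff (n : ℕ) : -w * ((n + 1) * w ^ n * ∫ u in (0 : ℝ)..1, (1 - u) ^ n * Real.log u) =
      harmonic (n + 1) * w ^ (n + 1) := by
    rw [integral_one_sub_pow_mul_log]
    field_simp
    ring
  have value : -w * ∫ u in (0 : ℝ)..1, 1 / (1 - (1 - u) * w) ^ 2 * Real.log u =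
      -∫ u in (0 : ℝ)..1, w * Real.log u / (1 - (1 - u) * w) ^ 2 := by
    rw [neg_mul, ← intervalIntegral.integral_const_mul]
    congr! 3
    ring
  rw [← hasSum_nat_add_iff' 1]
  simpa only [coeff, value, Finset.range_one, Finset.sum_singleton, harmonic_zero, Rat.cast_zero,
    zero_mul, sub_zero] using log_series

theorem stmt_5_general {x : ℝ} (hx : |x| < 4) :
    HasSum (fun n : ℕ ↦ (harmonic n : ℝ) * x ^ n / ((2 * n + 1) * (Nat.choose (2 * n) n)))
      (-∫ v in (0 : ℝ)..1, ∫ u in (0 : ℝ)..1,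
        x * v * (1 - v) * Real.log u / (1 - (1 - u) * x * v * (1 - v)) ^ 2) := by
  have expansion (w : ℝ) (hw : w ∈ Icc (0 : ℝ) (1 / 4)) :
      HasSum (fun n ↦ (harmonic n : ℝ) * x ^ n * w ^ n)
        (-∫ u in (0 : ℝ)..1, x * w * Real.log u / (1 - (1 - u) * (x * w)) ^ 2) := by
    have : |x * w| < 1 := by
      rw [abs_mul, abs_of_nonneg hw.1]
      linarith [mul_le_mul_of_nonneg_left hw.2 (abs_nonneg x)]
    simpa only [mul_pow, mul_assoc] using hasSum_harmonic_mul_pow this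
  have coeff_summable : Summable fun n ↦ ‖(harmonic n : ℝ) * x ^ n‖ * (1 / 4) ^ n := by
    simpa using (expansion (1 / 4) (by norm_num)).summable.norm
  simpa only [intervalIntegral.integral_neg, ← mul_assoc] using
    hasSum_integral_comp_mul_one_sub coeff_summable expansion

theorem stmt_5 :
    ∑' n : ℕ, (harmonic n : ℝ) / ((2 * n + 1) * (Nat.choose (2 * n) n)) =
      -∫ v in (0:ℝ)..1, ∫ u in (0:ℝ)..1,
        v * (1 - v) * Real.log u / (1 - (1 - u) * v * (1 - v)) ^ 2 := by
  simpa using (stmt_5_general (x := 1) (by norm_num)).tsum_eq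
end

section
/- For every real number a with 0 < a < 1, the integral from 0 to 1 of log(u) / [1 - a(1-u)]² du equals log(1-a) / (a(1-a)). -/
/-!
Since `x / (p + q * x)` is an antiderivative of `p / (p + q * x) ^ 2` vanishing at `0`, integrating
by parts against it cancels the singularity of `log x` at `0` and leaves only the integral of
`(p + q * x)⁻¹`. The result is the case `p = 1 - a`, `q = a` on `[0, 1]`.
-/

open MeasureTheory Set Real
open scoped Interval

section AffineDenominator

variable {p q b c : ℝ}

lemma hasDerivAt_mul_log_div_add_mul {x : ℝ} (hx : x ≠ 0) (hpq : p + q * x ≠ 0) :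
    HasDerivAt (fun y ↦ y * log y / (p + q * y))
      (p * (log x / (p + q * x) ^ 2) + (p + q * x)⁻¹) x := by
  have affine_deriv : HasDerivAt (fun y ↦ p + q * y) q x := by
    simpa only [mul_one, id_eq] using ((hasDerivAt_id x).const_mul q).const_add p
  refine ((hasDerivAt_mul_log hx).div affine_deriv hpq).congr_deriv ?_
  field_simp
  ring

lemma intervalIntegrable_log_div_add_mul_sq (hpq : ∀ x ∈ [[b, c]], p + q * x ≠ 0) :
    IntervalIntegrable (fun x ↦ log x / (p + q * x) ^ 2) volume b c := by
  have weight_continuous : ContinuousOn (fun x ↦ ((p + q * x) ^ 2)⁻¹) [[b, c]] :=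
    ContinuousOn.inv₀ (by fun_prop) fun x hx ↦ pow_ne_zero 2 (hpq x hx)
  simpa only [div_eq_mul_inv] using
    intervalIntegral.intervalIntegrable_log'.mul_continuousOn weight_continuous

lemma mul_integral_log_div_add_mul_sq (hpq : ∀ x ∈ [[b, c]], p + q * x ≠ 0) :
    p * ∫ x in b..c, log x / (p + q * x) ^ 2 =
      c * log c / (p + q * c) - b * log b / (p + q * b) - ∫ x in b..c, (p + q * x)⁻¹ := by
  have log_integrable := (intervalIntegrable_log_div_add_mul_sq hpq).const_mul p
  have inv_integrable : IntervalIntegrable (fun x ↦ (p + q * x)⁻¹) volume b c :=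
    (ContinuousOn.inv₀ (by fun_prop) hpq).intervalIntegrable
  have primitive_continuous : ContinuousOn (fun x ↦ x * log x / (p + q * x)) [[b, c]] :=
    continuous_mul_log.continuousOn.div (by fun_prop) hpq
  have primitive_deriv : ∀ x ∈ Ioo (min b c) (max b c) \ {0},
      HasDerivAt (fun y ↦ y * log y / (p + q * y))
        (p * (log x / (p + q * x) ^ 2) + (p + q * x)⁻¹) x :=
    fun x hx ↦ hasDerivAt_mul_log_div_add_mul hx.2 (hpq x (Ioo_subset_Icc_self hx.1))
  rw [eq_sub_iff_add_eq, ← intervalIntegral.integral_const_mul,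
    ← intervalIntegral.integral_add log_integrable inv_integrable]
  exact integral_eq_of_hasDerivAt_off_countable _ _ (countable_singleton 0)
    primitive_continuous primitive_deriv (log_integrable.add inv_integrable)

lemma integral_inv_add_mul (hq : q ≠ 0) (hpq : ∀ x ∈ [[b, c]], p + q * x ≠ 0) :
    ∫ x in b..c, (p + q * x)⁻¹ = log ((p + q * c) / (p + q * b)) / q := by
  have zero_notMem : (0 : ℝ) ∉ [[p + q * b, p + q * c]] := by
    rw [← image_const_add_uIcc, ← image_const_mul_uIcc, image_image]
    rintro ⟨x, hx, hx0⟩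
    exact hpq x hx hx0
  rw [intervalIntegral.integral_comp_add_mul (fun y ↦ y⁻¹) hq, integral_inv zero_notMem,
    smul_eq_mul, inv_mul_eq_div]

end AffineDenominator

theorem stmt_7_general {a : ℝ} (ha0 : a ≠ 0) (ha1 : a < 1) :
    ∫ u in (0:ℝ)..1, log u / (1 - a * (1 - u)) ^ 2 = log (1 - a) / (a * (1 - a)) := by
  have denom_ne : ∀ u ∈ [[(0:ℝ), 1]], 1 - a + a * u ≠ 0 := by
    intro u hu
    rw [uIcc_of_le zero_le_one] at hu
    have denom_convex : 1 - a + a * u = (1 - a) * (1 - u) + u := by ring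
    have first_nonneg : 0 ≤ (1 - a) * (1 - u) := mul_nonneg (sub_pos.2 ha1).le (sub_nonneg.2 hu.2)
    rcases hu.1.eq_or_lt with rfl | u_pos <;> linarith
  have by_parts : (1 - a) * ∫ u in (0:ℝ)..1, log u / (1 - a + a * u) ^ 2 = log (1 - a) / a := by
    rw [mul_integral_log_div_add_mul_sq denom_ne, integral_inv_add_mul ha0 denom_ne]
    simp [neg_div]
  have denom_eq (u : ℝ) : 1 - a * (1 - u) = 1 - a + a * u := by ring
  simp only [denom_eq]
  rw [← div_div, ← by_parts, mul_div_cancel_left₀ _ (sub_pos.2 ha1).ne']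

theorem stmt_7 (a : ℝ) (ha0 : 0 < a) (ha1 : a < 1) :
    ∫ u in (0:ℝ)..1, Real.log u / (1 - a * (1 - u)) ^ 2 =
      Real.log (1 - a) / (a * (1 - a)) :=
  stmt_7_general ha0.ne' ha1
end

section
/- For every real number v with 0 < v < 1, the integral from 0 to 1 (in u) of v(1-v) log(u) / [1 - (1-u) v(1-v)]² du equals log(1 - v(1-v)) / (1 - v(1-v)). -/
/-!
Integrate by parts, taking `u / (p * (p + q * u))` as the primitive of `1 / (p + q * u) ^ 2`: it
vanishes at `0`, so the boundary term is a multiple of `u * log u / (p + q * u)`, continuous at the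
singularity of the logarithm, and the remaining integrand is a multiple of `1 / (p + q * u)`. Here
`p = 1 - c` and `q = c` with `c = v * (1 - v)`, so `p + q * u` is positive on `[0, 1]`: its endpoint
values are `1 - c = v ^ 2 - v + 1` and `1`.
-/

open MeasureTheory Set

section LogDivAffineSq

/-- The primitive of `u ↦ q * log u / (p + q * u) ^ 2` given by integration by parts. The factor
`u * log u` is kept together because it is continuous at `0`, where `log` is not. -/
noncomputable def logDivAffineSqPrimitive (p q u : ℝ) : ℝ :=
  (q * (u * Real.log u) / (p + q * u) - Real.log (p + q * u)) / p

variable {p q u a b : ℝ}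

theorem continuousAt_logDivAffineSqPrimitive (hu : p + q * u ≠ 0) :
    ContinuousAt (logDivAffineSqPrimitive p q) u := by
  have h_affine : ContinuousAt (fun x : ℝ => p + q * x) u := by fun_prop
  have h_mul_log : ContinuousAt (fun x : ℝ => x * Real.log x) u :=
    Real.continuous_mul_log.continuousAt
  exact (((h_mul_log.const_mul q).div h_affine hu).sub (h_affine.log hu)).div_const p

theorem hasDerivAt_logDivAffineSqPrimitive (hp : p ≠ 0) (hu₀ : u ≠ 0) (hu : p + q * u ≠ 0) :
    HasDerivAt (logDivAffineSqPrimitive p q) (q * Real.log u / (p + q * u) ^ 2) u := by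
  have h_affine : HasDerivAt (fun x : ℝ => p + q * x) q u := by
    simpa using ((hasDerivAt_id u).const_mul q).const_add p
  have h_boundary := ((Real.hasDerivAt_mul_log hu₀).const_mul q).div h_affine hu
  refine ((h_boundary.sub (h_affine.log hu)).div_const p).congr_deriv ?_
  field_simp
  ring

theorem intervalIntegrable_mul_log_div_affine_sq (h : ∀ u ∈ uIcc a b, p + q * u ≠ 0) :
    IntervalIntegrable (fun u => q * Real.log u / (p + q * u) ^ 2) volume a b := by
  have h_cont : ContinuousOn (fun u : ℝ => q / (p + q * u) ^ 2) (uIcc a b) :=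
    continuousOn_const.div (by fun_prop) fun u hu => pow_ne_zero 2 (h u hu)
  simpa only [div_mul_eq_mul_div] using
    intervalIntegral.intervalIntegrable_log'.continuousOn_mul h_cont

theorem integral_mul_log_div_affine_sq (hp : p ≠ 0) (h : ∀ u ∈ uIcc a b, p + q * u ≠ 0) :
    ∫ u in a..b, q * Real.log u / (p + q * u) ^ 2 =
      logDivAffineSqPrimitive p q b - logDivAffineSqPrimitive p q a :=
  integral_eq_of_hasDerivAt_off_countable _ _ (countable_singleton 0)
    (fun u hu => (continuousAt_logDivAffineSqPrimitive (h u hu)).continuousWithinAt)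
    (fun u hu => hasDerivAt_logDivAffineSqPrimitive hp hu.2 (h u (Ioo_subset_Icc_self hu.1)))
    (intervalIntegrable_mul_log_div_affine_sq h)

end LogDivAffineSq

theorem one_sub_one_sub_mul_pos {c u : ℝ} (hc : c < 1) (hu : u ∈ Icc (0 : ℝ) 1) :
    0 < 1 - (1 - u) * c := by
  rcases hu.1.eq_or_lt with rfl | hu_pos
  · linarith
  · have h_mul_le : (1 - u) * c ≤ 1 - u := mul_le_of_le_one_right (sub_nonneg.mpr hu.2) hc.le
    linarith

theorem integral_mul_log_div_one_sub_one_sub_mul_sq {c : ℝ} (hc : c < 1) :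
    ∫ u in (0 : ℝ)..1, c * Real.log u / (1 - (1 - u) * c) ^ 2 = Real.log (1 - c) / (1 - c) := by
  have h_affine (u : ℝ) : 1 - (1 - u) * c = (1 - c) + c * u := by ring
  have h_ne : ∀ u ∈ uIcc (0 : ℝ) 1, (1 - c) + c * u ≠ 0 := fun u hu => by
    rw [← h_affine]
    exact (one_sub_one_sub_mul_pos hc (uIcc_of_le (zero_le_one' ℝ) ▸ hu)).ne'
  simp only [h_affine]
  rw [integral_mul_log_div_affine_sq (sub_pos.mpr hc).ne' h_ne]
  simp [logDivAffineSqPrimitive, neg_div]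

theorem stmt_8_general (v : ℝ) :
    ∫ u in (0:ℝ)..1, v * (1 - v) * Real.log u / (1 - (1 - u) * v * (1 - v)) ^ 2 =
      Real.log (1 - v * (1 - v)) / (1 - v * (1 - v)) := by
  have hc : v * (1 - v) < 1 := by nlinarith [sq_nonneg (2 * v - 1)]
  simpa only [mul_assoc] using integral_mul_log_div_one_sub_one_sub_mul_sq hc

theorem stmt_8 (v : ℝ) (hv0 : 0 < v) (hv1 : v < 1) :
    ∫ u in (0:ℝ)..1, v * (1 - v) * Real.log u / (1 - (1 - u) * v * (1 - v)) ^ 2 =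
      Real.log (1 - v * (1 - v)) / (1 - v * (1 - v)) := by
  exact stmt_8_general v
end

section
/- For every real number x with -π < x < π, the complex identity log(1 + e^{ix}) = log(2 cos(x/2)) + i x/2 holds, where log on the left is the principal branch of the complex logarithm. -/
/-!
The half-angle factorization `1 + exp (z * I) = 2 * cos (z / 2) * exp (z / 2 * I)` reduces the
identity to additivity of the principal logarithm. In the strip `|re z| < π` the factor
`2 * cos (z / 2)` has positive real part, so its argument lies strictly between `-π / 2` and
`π / 2`, as does the imaginary part `re z / 2` of `z / 2 * I`; the sum of the two therefore never
crosses the branch cut.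
-/

theorem one_add_exp_mul_I (z : ℂ) :
    1 + Complex.exp (z * Complex.I) =
      2 * Complex.cos (z / 2) * Complex.exp (z / 2 * Complex.I) := by
  rw [Complex.two_cos, add_mul, ← Complex.exp_add, ← Complex.exp_add, neg_mul, neg_add_cancel,
    Complex.exp_zero, ← add_mul, add_halves, add_comm]

theorem re_cos (z : ℂ) : (Complex.cos z).re = Real.cos z.re * Real.cosh z.im := by
  rw [Complex.cos_eq]
  norm_cast
  simp [Complex.cos_ofReal_re]

theorem re_cos_pos {z : ℂ} (hz : |z.re| < Real.pi / 2) : 0 < (Complex.cos z).re := by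
  rw [re_cos]
  exact mul_pos (Real.cos_pos_of_mem_Ioo (abs_lt.mp hz)) (Real.cosh_pos _)

theorem log_mul_exp_of_re_pos {w v : ℂ} (hw : 0 < w.re) (hv : |v.im| ≤ Real.pi / 2) :
    Complex.log (w * Complex.exp v) = Complex.log w + v := by
  have hw_ne : w ≠ 0 := by
    rintro rfl
    exact hw.false
  obtain ⟨arg_lower, arg_upper⟩ :=
    abs_lt.mp (Complex.abs_arg_lt_pi_div_two_iff.mpr (.inl hw))
  obtain ⟨im_lower, im_upper⟩ := abs_le.mp hv
  have log_exp : Complex.log (Complex.exp v) = v :=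
    Complex.log_exp (by linarith [Real.pi_pos]) (by linarith [Real.pi_pos])
  have arg_exp : (Complex.exp v).arg = v.im := by
    rw [← Complex.log_im, log_exp]
  rw [Complex.log_mul hw_ne (Complex.exp_ne_zero v)
    (by rw [arg_exp]; constructor <;> linarith), log_exp]

theorem stmt_10_general {z : ℂ} (hz : |z.re| < Real.pi) :
    Complex.log (1 + Complex.exp (z * Complex.I)) =
      Complex.log (2 * Complex.cos (z / 2)) + z / 2 * Complex.I := by
  have half_re : |(z / 2).re| < Real.pi / 2 := by
    rw [Complex.div_ofNat_re, abs_div, Nat.abs_ofNat]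
    linarith
  have two_cos_re_pos : 0 < (2 * Complex.cos (z / 2)).re := by
    simpa using re_cos_pos half_re
  rw [one_add_exp_mul_I]
  exact log_mul_exp_of_re_pos two_cos_re_pos (by simpa using half_re.le)

theorem stmt_10 (x : ℝ) (hx1 : -Real.pi < x) (hx2 : x < Real.pi) :
    Complex.log (1 + Complex.exp (x * Complex.I)) =
      (Real.log (2 * Real.cos (x / 2)) : ℂ) + (x / 2 : ℝ) * Complex.I := by
  have cos_pos : 0 < Real.cos (x / 2) :=
    Real.cos_pos_of_mem_Ioo ⟨by linarith, by linarith⟩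
  rw [Complex.ofReal_log (by positivity)]
  exact_mod_cast stmt_10_general (z := x) (abs_lt.mpr ⟨hx1, hx2⟩)
end

section
/- The integral ∫₀¹ log(1 - v(1-v)) / (1 - v(1-v)) dv equals (π/(3√3)) log 3 + (2/√3) δ₁, where δ₁ is the real number given by δ₁ = i ∑_{n=1}^∞ [((√3 + i)/(2√3))^n - ((√3 - i)/(2√3))^n] / n². -/
/-!
Up to an arctangent, the primitive is the Bloch–Wigner dilogarithm: the function
`D z = Im Li₂(z) + arg (1 - z) log |z|` satisfies
`dD = log |z| d arg (1 - z) - log |1 - z| d arg z`. On the line `Re z = 1/2` one has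
`|z| = |1 - z|` and `arg (1 - z) = -arg z`, so along `z = (1 + iu) / 2` this becomes
`dD = -log ((1 + u²) / 4) du / (1 + u²)`. Completing the square, `v = 1/2 + (√3/2) u` turns
`1 - v (1 - v)` into `(3/4) (1 + u²)`.
-/

open Complex ComplexConjugate
open scoped Interval

section Dilogarithm

variable {z : ℂ}

/-- The dilogarithm `Li₂(z) = ∑_{n ≥ 1} zⁿ / n²`, defined by its power series and hence meaningful
only on the closed unit disc. The index is shifted so that the sum starts at `n = 0`. -/
noncomputable def dilog (z : ℂ) : ℂ := ∑' n : ℕ, z ^ (n + 1) / ((n : ℂ) + 1) ^ 2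

lemma summable_dilog (hz : ‖z‖ ≤ 1) :
    Summable fun n : ℕ ↦ z ^ (n + 1) / ((n : ℂ) + 1) ^ 2 := by
  have hsum : Summable fun n : ℕ ↦ 1 / ((n + 1 : ℕ) : ℝ) ^ 2 :=
    (summable_nat_add_iff 1).2 (Real.summable_one_div_nat_pow.2 one_lt_two)
  refine hsum.of_norm_bounded fun n ↦ ?_
  rw [← Nat.cast_succ, norm_div, norm_pow, norm_pow, norm_natCast]
  gcongr
  exact pow_le_one₀ (norm_nonneg z) hz

lemma dilog_conj (z : ℂ) : dilog (conj z) = conj (dilog z) := by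
  simp [dilog, conj_tsum]

lemma I_mul_tsum_pow_sub_conj_pow_div (hz : ‖z‖ ≤ 1) :
    I * ∑' n : ℕ, (z ^ (n + 1) - conj z ^ (n + 1)) / ((n : ℂ) + 1) ^ 2 =
      ((-2 * (dilog z).im : ℝ) : ℂ) := by
  have hsub : ∑' n : ℕ, (z ^ (n + 1) - conj z ^ (n + 1)) / ((n : ℂ) + 1) ^ 2 =
      dilog z - dilog (conj z) := by
    simp only [dilog, sub_div,
      (summable_dilog hz).tsum_sub (summable_dilog ((norm_conj z).trans_le hz))]
  rw [hsub, dilog_conj, sub_conj]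
  push_cast
  linear_combination 2 * ((dilog z).im : ℂ) * I_mul_I

lemma tsum_pow_div_add_one_eq_neg_log_div (hz : ‖z‖ < 1) (hz₀ : z ≠ 0) :
    ∑' n : ℕ, z ^ n / ((n : ℂ) + 1) = -log (1 - z) / z := by
  rw [← ((hasSum_taylorSeries_neg_log' hz).div_const z).tsum_eq]
  refine tsum_congr fun n ↦ ?_
  rw [div_right_comm, pow_succ, mul_div_cancel_right₀ _ hz₀]

lemma hasDerivAt_pow_div_add_one_sq (n : ℕ) (z : ℂ) :
    HasDerivAt (fun y : ℂ ↦ y ^ (n + 1) / ((n : ℂ) + 1) ^ 2) (z ^ n / ((n : ℂ) + 1)) z := by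
  refine ((hasDerivAt_pow (n + 1) z).div_const _).congr_deriv ?_
  have hn : (n : ℂ) + 1 ≠ 0 := Nat.cast_add_one_ne_zero n
  push_cast
  field_simp

lemma hasDerivAt_dilog (hz : ‖z‖ < 1) (hz₀ : z ≠ 0) :
    HasDerivAt dilog (-log (1 - z) / z) z := by
  obtain ⟨r, hzr, hr⟩ := exists_between hz
  have norm_term_le (n : ℕ) (y : ℂ) (hy : y ∈ Metric.ball 0 r) :
      ‖y ^ n / ((n : ℂ) + 1)‖ ≤ r ^ n := by
    rw [← Nat.cast_succ, norm_div, norm_pow, norm_natCast]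
    calc ‖y‖ ^ n / (n.succ : ℝ) ≤ ‖y‖ ^ n :=
          div_le_self (by positivity) (by exact_mod_cast n.succ_pos)
      _ ≤ r ^ n := by gcongr; exact (mem_ball_zero_iff.1 hy).le
  rw [← tsum_pow_div_add_one_eq_neg_log_div hz hz₀]
  exact hasDerivAt_tsum_of_isPreconnected
    (summable_geometric_of_lt_one ((norm_nonneg z).trans hzr.le) hr)
    Metric.isOpen_ball (convex_ball 0 r).isPreconnected
    (fun n y _ ↦ hasDerivAt_pow_div_add_one_sq n y) norm_term_le
    (mem_ball_zero_iff.2 hzr) (summable_dilog hz.le) (mem_ball_zero_iff.2 hzr)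

end Dilogarithm

section BlochWigner

variable {z : ℂ} {γ : ℝ → ℂ} {γ' : ℂ} {t : ℝ}

/-- The Bloch–Wigner function `D(z) = Im Li₂(z) + arg (1 - z) log |z|`, the single-valued version
of the dilogarithm. Being built on the power series of `Li₂`, it is meaningful here only on the
unit disc. -/
noncomputable def blochWigner (z : ℂ) : ℝ := (dilog z).im + (1 - z).arg * Real.log ‖z‖

lemma one_sub_mem_slitPlane_of_norm_lt_one (hz : ‖z‖ < 1) : 1 - z ∈ slitPlane := by
  rw [sub_eq_add_neg]
  exact mem_slitPlane_of_norm_lt_one (by rwa [norm_neg])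

lemma blochWigner_conj (hz : ‖z‖ < 1) : blochWigner (conj z) = -blochWigner z := by
  have harg : (1 - conj z).arg = -(1 - z).arg := by
    rw [← map_one conj, ← map_sub, arg_conj, map_one,
      if_neg (slitPlane_arg_ne_pi (one_sub_mem_slitPlane_of_norm_lt_one hz))]
  rw [blochWigner, blochWigner, dilog_conj, conj_im, norm_conj, harg]
  ring

lemma hasDerivAt_log_norm_comp (hγ : HasDerivAt γ γ' t) (hne : γ t ≠ 0) :
    HasDerivAt (fun s ↦ Real.log ‖γ s‖) (γ' / γ t).re t := by
  have hlog : (fun s ↦ Real.log ‖γ s‖) = fun s ↦ Real.log (‖γ s‖ ^ 2) / 2 := by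
    funext s
    rw [Real.log_pow]
    ring
  rw [hlog]
  refine ((hγ.norm_sq.log (by positivity)).div_const 2).congr_deriv ?_
  rw [div_re, normSq_eq_norm_sq, Complex.inner]
  simp only [mul_re, conj_re, conj_im]
  ring

lemma hasDerivAt_blochWigner_comp (hγ : HasDerivAt γ γ' t) (hlt : ‖γ t‖ < 1) (hne : γ t ≠ 0) :
    HasDerivAt (fun s ↦ blochWigner (γ s))
      (Real.log ‖γ t‖ * (-γ' / (1 - γ t)).im - Real.log ‖1 - γ t‖ * (γ' / γ t).im) t := by
  have him := imCLM.hasFDerivAt.comp_hasDerivAt t ((hasDerivAt_dilog hlt hne).scomp t hγ)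
  have harg := imCLM.hasFDerivAt.comp_hasDerivAt t
    ((hγ.const_sub 1).clog_real (one_sub_mem_slitPlane_of_norm_lt_one hlt))
  simp only [blochWigner, ← log_im]
  refine (him.add (harg.mul (hasDerivAt_log_norm_comp hγ hne))).congr_deriv ?_
  have hmul : γ' * (-log (1 - γ t) / γ t) = -(log (1 - γ t) * (γ' / γ t)) := by ring
  simp only [imCLM_apply, smul_eq_mul, Function.comp_apply, hmul, neg_im, mul_im, log_re, log_im]
  ring

end BlochWigner

section Midline

/-- The parametrization `u ↦ (1 + iu) / 2` of the line `Re z = 1/2`, scaled so that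
`arg (midline u) = arctan u`. -/
noncomputable def midline (u : ℝ) : ℂ := (1 + u * I) / 2

variable {a b c k : ℝ}

lemma conj_midline (u : ℝ) : conj (midline u) = midline (-u) := by
  simp [midline, ← sub_eq_add_neg, conj_ofNat]

lemma one_sub_midline (u : ℝ) : 1 - midline u = midline (-u) := by
  simp only [midline, ofReal_neg]
  ring

lemma midline_ne_zero (u : ℝ) : midline u ≠ 0 := fun h ↦ by
  simpa [midline] using congrArg re h

lemma norm_midline (u : ℝ) : ‖midline u‖ = √(1 + u ^ 2) / 2 := by
  rw [midline, norm_div, ← ofReal_one, norm_add_mul_I]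
  simp

lemma norm_midline_neg (u : ℝ) : ‖midline (-u)‖ = ‖midline u‖ := by
  rw [← conj_midline, norm_conj]

lemma norm_midline_lt_one {u : ℝ} (hu : |u| < √3) : ‖midline u‖ < 1 := by
  rw [norm_midline, div_lt_one two_pos, Real.sqrt_lt' two_pos]
  have := (Real.lt_sqrt (abs_nonneg u)).1 hu
  rw [sq_abs] at this
  linarith

lemma log_norm_midline (u : ℝ) : Real.log ‖midline u‖ = Real.log ((1 + u ^ 2) / 4) / 2 := by
  have hsq : (1 + u ^ 2) / 4 = ‖midline u‖ ^ 2 := by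
    rw [norm_midline, div_pow, Real.sq_sqrt (by positivity)]
    norm_num
  rw [hsq, Real.log_pow]
  ring

lemma arg_midline (u : ℝ) : (midline u).arg = Real.arctan u := by
  have hre : 0 ≤ (midline u).re := by simp [midline]
  rw [arg_of_re_nonneg hre, norm_midline, Real.arctan_eq_arcsin]
  have him : (midline u).im = u / 2 := by simp [midline]
  rw [him, div_div_div_cancel_right₀ two_ne_zero]

lemma hasDerivAt_midline (u : ℝ) : HasDerivAt midline (I / 2) u := by
  have h := (((hasDerivAt_id u).ofReal_comp.mul_const I).const_add 1).div_const 2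
  rwa [ofReal_one, one_mul] at h

lemma blochWigner_midline (u : ℝ) : blochWigner (midline u) =
    (dilog (midline u)).im - Real.arctan u * Real.log ((1 + u ^ 2) / 4) / 2 := by
  rw [blochWigner, one_sub_midline, arg_midline, log_norm_midline, Real.arctan_neg]
  ring

lemma im_I_div_two_div_midline (u : ℝ) : (I / 2 / midline u).im = 1 / (1 + u ^ 2) := by
  have hnormSq : normSq (1 + u * I) = 1 + u ^ 2 := by
    rw [← ofReal_one, normSq_add_mul_I, one_pow]
  rw [midline, div_div_div_cancel_right₀ two_ne_zero, div_im, hnormSq]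
  simp

lemma hasDerivAt_blochWigner_midline {u : ℝ} (hu : |u| < √3) :
    HasDerivAt (fun s ↦ blochWigner (midline s))
      (-Real.log ((1 + u ^ 2) / 4) / (1 + u ^ 2)) u := by
  refine (hasDerivAt_blochWigner_comp (hasDerivAt_midline u) (norm_midline_lt_one hu)
    (midline_ne_zero u)).congr_deriv ?_
  rw [one_sub_midline, norm_midline_neg, neg_div, neg_im, im_I_div_two_div_midline,
    im_I_div_two_div_midline, log_norm_midline, neg_sq]
  ring

theorem integral_log_mul_one_add_sq_div_one_add_sq (hk : 0 < k) (ha : |a| < √3) (hb : |b| < √3) :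
    ∫ u in a..b, Real.log (k * (1 + u ^ 2)) / (1 + u ^ 2) =
      Real.log (4 * k) * (Real.arctan b - Real.arctan a) +
        (blochWigner (midline a) - blochWigner (midline b)) := by
  have hderiv : ∀ u ∈ [[a, b]], HasDerivAt
      (fun s ↦ Real.log (4 * k) * Real.arctan s - blochWigner (midline s))
      (Real.log (k * (1 + u ^ 2)) / (1 + u ^ 2)) u := by
    intro u hu
    have hu' : |u| < √3 := by
      rw [abs_lt] at ha hb ⊢
      exact Set.ordConnected_Ioo.uIcc_subset ha hb hu
    have hlog : Real.log (k * (1 + u ^ 2)) =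
        Real.log (4 * k) + Real.log ((1 + u ^ 2) / 4) := by
      rw [← Real.log_mul (by positivity) (by positivity)]
      congr 1
      ring
    refine (((Real.hasDerivAt_arctan u).const_mul _).sub
      (hasDerivAt_blochWigner_midline hu')).congr_deriv ?_
    rw [hlog]
    ring
  have hcont : Continuous fun u : ℝ ↦ Real.log (k * (1 + u ^ 2)) / (1 + u ^ 2) := by
    have hne (u : ℝ) : 1 + u ^ 2 ≠ 0 := by positivity
    exact (Continuous.log (by fun_prop) fun u ↦ mul_ne_zero hk.ne' (hne u)).div (by fun_prop) hne
  rw [intervalIntegral.integral_eq_sub_of_hasDerivAt hderiv (hcont.intervalIntegrable a b)]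
  ring

theorem integral_neg_self_log_mul_one_add_sq_div_one_add_sq (hk : 0 < k) (hc : |c| < √3) :
    ∫ u in -c..c, Real.log (k * (1 + u ^ 2)) / (1 + u ^ 2) =
      Real.arctan c * Real.log (4 * k ^ 2 * (1 + c ^ 2)) - 2 * (dilog (midline c)).im := by
  have hlog : Real.log (4 * k ^ 2 * (1 + c ^ 2)) =
      2 * Real.log (4 * k) + Real.log ((1 + c ^ 2) / 4) := by
    rw [← Real.log_rpow (by positivity), Real.rpow_two,
      ← Real.log_mul (by positivity) (by positivity)]
    congr 1
    ring
  rw [integral_log_mul_one_add_sq_div_one_add_sq hk (by rwa [abs_neg]) hc, ← conj_midline,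
    blochWigner_conj (norm_midline_lt_one hc), blochWigner_midline, Real.arctan_neg, hlog]
  ring

theorem integral_log_sq_add_sq_div_sq_add_sq (m : ℝ) {h : ℝ} (hb : 0 < b)
    (hh : |h| < √3 * b) :
    ∫ v in m - h..m + h, Real.log ((v - m) ^ 2 + b ^ 2) / ((v - m) ^ 2 + b ^ 2) =
      (Real.arctan (h / b) * Real.log (4 * b ^ 2 * (b ^ 2 + h ^ 2)) -
        2 * (dilog (midline (h / b))).im) / b := by
  have hlt : |h / b| < √3 := by rwa [abs_div, abs_of_pos hb, div_lt_iff₀ hb]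
  have hscale (v : ℝ) : Real.log ((v - m) ^ 2 + b ^ 2) / ((v - m) ^ 2 + b ^ 2) =
      (b ^ 2)⁻¹ * (Real.log (b ^ 2 * (1 + (v / b - m / b) ^ 2)) / (1 + (v / b - m / b) ^ 2)) := by
    have hsq : (v - m) ^ 2 + b ^ 2 = b ^ 2 * (1 + (v / b - m / b) ^ 2) := by
      field_simp
      ring
    rw [hsq, mul_comm (b ^ 2), div_mul_eq_div_div]
    ring
  have hlower : (m - h) / b - m / b = -(h / b) := by ring
  have hupper : (m + h) / b - m / b = h / b := by ring
  have hlog : 4 * (b ^ 2) ^ 2 * (1 + (h / b) ^ 2) = 4 * b ^ 2 * (b ^ 2 + h ^ 2) := by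
    field_simp
  simp_rw [hscale]
  rw [intervalIntegral.integral_const_mul, intervalIntegral.integral_comp_div_sub
    (fun u ↦ Real.log (b ^ 2 * (1 + u ^ 2)) / (1 + u ^ 2)) hb.ne', hlower, hupper,
    integral_neg_self_log_mul_one_add_sq_div_one_add_sq (by positivity) hlt, hlog, smul_eq_mul]
  field_simp

lemma midline_inv_sqrt_three : midline (√3)⁻¹ = ((√3 : ℂ) + I) / (2 * (√3 : ℂ)) := by
  have h : (√3 : ℂ) ≠ 0 := by simp
  rw [midline, ofReal_inv]
  field_simp

lemma conj_midline_inv_sqrt_three :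
    conj (midline (√3)⁻¹) = ((√3 : ℂ) - I) / (2 * (√3 : ℂ)) := by
  simp [midline_inv_sqrt_three, ← sub_eq_add_neg, conj_ofNat]

lemma norm_midline_inv_sqrt_three_lt_one : ‖midline (√3)⁻¹‖ < 1 := by
  refine norm_midline_lt_one ?_
  rw [abs_of_pos (by positivity), inv_lt_iff_one_lt_mul₀ (by positivity),
    Real.mul_self_sqrt zero_le_three]
  norm_num

end Midline

lemma integral_log_one_sub_mul_one_sub_div :
    ∫ v in (0 : ℝ)..1, Real.log (1 - v * (1 - v)) / (1 - v * (1 - v)) =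
      (Real.pi / 6 * Real.log 3 - 2 * (dilog (midline (√3)⁻¹)).im) / (√3 / 2) := by
  have hsq : √3 * √3 = 3 := Real.mul_self_sqrt zero_le_three
  have hquad (v : ℝ) : 1 - v * (1 - v) = (v - 1 / 2) ^ 2 + (√3 / 2) ^ 2 := by
    linear_combination -hsq / 4
  have hhalf : |(1 / 2 : ℝ)| < √3 * (√3 / 2) := by
    rw [mul_div_assoc', hsq, abs_of_pos one_half_pos]
    norm_num
  have hratio : 1 / 2 / (√3 / 2) = (√3)⁻¹ := by field_simp
  have hthree : 4 * (√3 / 2) ^ 2 * ((√3 / 2) ^ 2 + (1 / 2) ^ 2) = 3 := by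
    linear_combination (√3 * √3 + 4) / 4 * hsq
  have hint := integral_log_sq_add_sq_div_sq_add_sq (1 / 2) (by positivity) hhalf
  rw [hratio, hthree, Real.arctan_inv_sqrt_three, sub_self, add_halves] at hint
  simpa only [hquad] using hint

theorem stmt_12 (δ₁ : ℝ)
    (hδ : (δ₁ : ℂ) = Complex.I * ∑' n : ℕ,
        ((((Real.sqrt 3 : ℂ) + Complex.I) / (2 * (Real.sqrt 3 : ℂ))) ^ (n + 1) -
          (((Real.sqrt 3 : ℂ) - Complex.I) / (2 * (Real.sqrt 3 : ℂ))) ^ (n + 1)) /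
        ((n : ℂ) + 1) ^ 2) :
    ∫ v in (0:ℝ)..1, Real.log (1 - v * (1 - v)) / (1 - v * (1 - v)) =
      Real.pi / (3 * Real.sqrt 3) * Real.log 3 + (2 / Real.sqrt 3) * δ₁ := by
  have hδ_im : δ₁ = -2 * (dilog (midline (√3)⁻¹)).im := by
    rw [← midline_inv_sqrt_three, ← conj_midline_inv_sqrt_three,
      I_mul_tsum_pow_sub_conj_pow_div norm_midline_inv_sqrt_three_lt_one.le] at hδ
    exact_mod_cast hδ
  rw [integral_log_one_sub_mul_one_sub_div, hδ_im]
  field_simp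
  ring
end
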